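/- The function δ defined on pairs of m×m positive definite complex matrices by δ(A,B) = ‖log(A^{-1/2} B A^{-1/2})‖₂ is a metric on the set of positive definite matrices: δ(A,B) ≥ 0 with equality iff A = B, δ(A,B) = δ(B,A), and δ(A,C) ≤ δ(A,B) + δ(B,C) for all positive definite A, B, C. -/

import Mathlib

/-!
Two positive definite matrices can be written `A = T Tᴴ`, `B = T diag(exp x) Tᴴ` with `T` invertible
(`exists_simultaneous`), and then `rdist A B` is the Euclidean norm of `x` (`rdist_eq`). Separation
and symmetry are immediate from this.

For the triangle inequality, congruence by `A^{-1/2}` reduces to `A = 1`: with `B = T Tᴴ` and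
`C = T diag(exp x) Tᴴ`, the claim becomes `‖log C‖₂ ≤ ‖log B‖₂ + ‖x‖` (`matrix_long_step`). This
follows by adding up a local estimate (`matrix_step`) along the geodesic `T diag(exp (t x)) Tᴴ`: one
step of length `K` increases `‖log ·‖₂` by at most `r + r ^ 2`, `r = K exp K`; with `n` steps of
length `‖x‖ / n` and `n → ∞` the total increase is at most `‖x‖`.

For the local estimate let `p i`, `q j` be the eigenvalues of `P`, `Q`, and let `w j i` be the squared
moduli of the inner products of their eigenvectors, a doubly stochastic matrix. Then
`∑ log² p - ∑ log² q` is the `w`-average of `log² (p i) - log² (q j)`, and `log²` is expanded at `q j`.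
With `s = p i / q j` the first-order term is `2 log (q j) (s - 1)`, which averages to
`2 Tr(log Q (Q^{-1/2} P Q^{-1/2} - 1))` and is bounded by Cauchy–Schwarz. The remainder is at most
`(1 + 2 |log (q j)|) (s + 1 / s - 2)` (`log_sq_le`), and `s + 1 / s - 2` averages to
`Tr(P Q⁻¹ + Q P⁻¹ - 2) = ∑ (exp x + exp (-x) - 2)`, which is quadratic in `x`.
-/

open Matrix
open scoped ComplexOrder

noncomputable def matFun {m : ℕ} (f : ℝ → ℝ) (A : Matrix (Fin m) (Fin m) ℂ) :
    Matrix (Fin m) (Fin m) ℂ :=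
  if hA : A.IsHermitian then
    (hA.eigenvectorUnitary : Matrix (Fin m) (Fin m) ℂ) *
      Matrix.diagonal (fun i => (f (hA.eigenvalues i) : ℂ)) *
      (star (hA.eigenvectorUnitary : Matrix (Fin m) (Fin m) ℂ))
  else 0

/-- The unique positive definite square root of a positive definite matrix
(realized via the spectral decomposition). -/
noncomputable def msqrt {m : ℕ} (A : Matrix (Fin m) (Fin m) ℂ) : Matrix (Fin m) (Fin m) ℂ :=
  matFun Real.sqrt A

/-- The logarithm of a positive definite matrix: the unique Hermitian `L` with `exp L = A`. -/
noncomputable def mlog {m : ℕ} (A : Matrix (Fin m) (Fin m) ℂ) : Matrix (Fin m) (Fin m) ℂ :=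
  matFun Real.log A

/-- The real power `A ^ t` of a positive definite matrix, via the spectral decomposition. -/
noncomputable def mpow {m : ℕ} (A : Matrix (Fin m) (Fin m) ℂ) (t : ℝ) : Matrix (Fin m) (Fin m) ℂ :=
  matFun (fun x => x ^ t) A

/-- The matrix geometric mean `A # B`. -/
noncomputable def gmean {m : ℕ} (A B : Matrix (Fin m) (Fin m) ℂ) : Matrix (Fin m) (Fin m) ℂ :=
  msqrt A * msqrt ((msqrt A)⁻¹ * B * (msqrt A)⁻¹) * msqrt A

/-- The weighted geometric mean `A #_t B`. -/
noncomputable def wgmean {m : ℕ} (A B : Matrix (Fin m) (Fin m) ℂ) (t : ℝ) :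
    Matrix (Fin m) (Fin m) ℂ :=
  msqrt A * mpow ((msqrt A)⁻¹ * B * (msqrt A)⁻¹) t * msqrt A

/-- The Frobenius (Hilbert–Schmidt) norm `‖X‖₂ = (Tr(X*X))^{1/2}`. -/
noncomputable def fnorm {m : ℕ} (X : Matrix (Fin m) (Fin m) ℂ) : ℝ :=
  Real.sqrt ((Xᴴ * X).trace.re)

/-- The Riemannian metric `δ(A,B) = ‖log(A^{-1/2} B A^{-1/2})‖₂`. -/
noncomputable def rdist {m : ℕ} (A B : Matrix (Fin m) (Fin m) ℂ) : ℝ :=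
  fnorm (mlog ((msqrt A)⁻¹ * B * (msqrt A)⁻¹))

/-- The Loewner order: `A ≤ B` iff `B - A` is positive semidefinite. -/
def Loewner {m : ℕ} (A B : Matrix (Fin m) (Fin m) ℂ) : Prop :=
  (B - A).PosSemidef

/-! ### Scalar estimates -/

lemma sq_le_exp_add_exp_neg (u : ℝ) : u ^ 2 ≤ Real.exp u + Real.exp (-u) - 2 := by
  have h1 : |u / 2| ≤ |Real.sinh (u / 2)| := by
    rw [Real.abs_sinh]
    exact Real.self_le_sinh_iff.2 (abs_nonneg _)
  have h2 := sq_le_sq.2 h1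
  have h3 := Real.cosh_sq (u / 2)
  have h4 := Real.cosh_two_mul (u / 2)
  rw [show 2 * (u / 2) = u by ring, Real.cosh_eq] at h4
  nlinarith

/-- Second-order expansion of `log ^ 2` at `q`, valid for every `p > 0`: with `s = p / q`, the error
is controlled by `s + 1 / s - 2`, whose average over eigenvalue pairs is a trace that can be
computed exactly. -/
lemma log_sq_le {p q g : ℝ} (hp : 0 < p) (hq : 0 < q) (hg : |Real.log q| ≤ g) :
    Real.log p ^ 2 ≤ Real.log q ^ 2 + 2 * Real.log q * (p / q - 1)
      + (1 + 2 * g) * (p / q + q / p - 2) := by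
  have hs : Real.log (p / q) = Real.log p - Real.log q := Real.log_div hp.ne' hq.ne'
  have h1 := sq_le_exp_add_exp_neg (Real.log (p / q))
  have hpq : 0 < p / q := by positivity
  have hqp : (p / q)⁻¹ = q / p := by simp
  rw [Real.exp_neg, Real.exp_log hpq, hqp] at h1
  have h2 := Real.log_le_sub_one_of_pos hpq
  have h3 := Real.one_sub_inv_le_log_of_pos hpq
  rw [hqp] at h3
  have h4 : 2 * Real.log q * (Real.log (p / q) - (p / q - 1)) ≤ 2 * g * (p / q + q / p - 2) := by
    have h5 : -Real.log q ≤ g := (neg_le_abs _).trans hg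
    have hg0 : 0 ≤ g := (abs_nonneg _).trans hg
    have := mul_le_mul_of_nonneg_right h5 (by linarith : 0 ≤ p / q - 1 - Real.log (p / q))
    have := mul_le_mul_of_nonneg_left (by linarith :
      p / q - 1 - Real.log (p / q) ≤ p / q + q / p - 2) hg0
    nlinarith
  have h5 : Real.log p = Real.log q + Real.log (p / q) := by rw [hs]; ring
  rw [h5]
  nlinarith

lemma abs_exp_sub_one_le_mul_exp (x : ℝ) : |Real.exp x - 1| ≤ |x| * Real.exp |x| := by
  rcases le_total 0 x with h | h
  · rw [abs_of_nonneg h, abs_of_nonneg (by linarith [Real.add_one_le_exp x])]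
    have h1 := Real.add_one_le_exp (-x)
    have h2 : Real.exp x * Real.exp (-x) = 1 := by rw [← Real.exp_add]; simp
    nlinarith [Real.exp_pos x]
  · have h0 : Real.exp x ≤ 1 := Real.exp_le_one_iff.2 h
    rw [abs_of_nonpos h, abs_of_nonpos (by linarith)]
    have h1 := Real.add_one_le_exp x
    have h2 : 1 ≤ Real.exp (-x) := Real.one_le_exp (by linarith)
    nlinarith

/-- Cauchy–Schwarz for a bilinear form given by a doubly stochastic matrix. -/
lemma weighted_cauchy {ι : Type*} [Fintype ι] {w : ι → ι → ℝ} (h0 : ∀ j k, 0 ≤ w j k)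
    (hr : ∀ j, ∑ k, w j k = 1) (hc : ∀ k, ∑ j, w j k = 1) (a b : ι → ℝ) :
    ∑ j, a j * ∑ k, w j k * b k ≤ √(∑ j, a j ^ 2) * √(∑ k, b k ^ 2) := by
  have key := Real.sum_mul_le_sqrt_mul_sqrt (Finset.univ : Finset (ι × ι))
    (fun z => √(w z.1 z.2) * a z.1) (fun z => √(w z.1 z.2) * b z.2)
  simp only [mul_pow, Real.sq_sqrt (h0 _ _), Fintype.sum_prod_type] at key
  have e1 : ∑ j, ∑ k, w j k * a j ^ 2 = ∑ j, a j ^ 2 := by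
    simp [← Finset.sum_mul, hr]
  have e2 : ∑ j, ∑ k, w j k * b k ^ 2 = ∑ k, b k ^ 2 := by
    rw [Finset.sum_comm]; simp [← Finset.sum_mul, hc]
  rw [e1, e2] at key
  refine le_trans (le_of_eq ?_) key
  refine Finset.sum_congr rfl fun j _ => ?_
  rw [Finset.mul_sum]
  refine Finset.sum_congr rfl fun k _ => ?_
  have := Real.mul_self_sqrt (h0 j k)
  linear_combination (-(a j * b k)) * this

lemma abs_le_sqrt_sum_sq {ι : Type*} [Fintype ι] (a : ι → ℝ) (j : ι) :
    |a j| ≤ √(∑ i, a i ^ 2) := by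
  rw [← Real.sqrt_sq_eq_abs]
  exact Real.sqrt_le_sqrt (Finset.single_le_sum (f := fun i => a i ^ 2)
    (fun i _ => sq_nonneg _) (Finset.mem_univ j))

/-- The local estimate in terms of eigenvalues. In the application `p` and `q` are the eigenvalues of
`P` and `Q`, the numbers `exp (x k)` are those of `Q⁻¹ P`, and `w`, `v` are the squared moduli of
the entries of two unitary matrices. The hypotheses `h1` and `h2` express the diagonal entries of
`P` and `P⁻¹` in an eigenbasis of `Q` in two ways. -/
lemma scalar_step {ι : Type*} [Fintype ι] {w v : ι → ι → ℝ}
    (w0 : ∀ j k, 0 ≤ w j k) (wr : ∀ j, ∑ k, w j k = 1) (wc : ∀ k, ∑ j, w j k = 1)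
    (v0 : ∀ j k, 0 ≤ v j k) (vr : ∀ j, ∑ k, v j k = 1) (vc : ∀ k, ∑ j, v j k = 1)
    {p q x : ι → ℝ} (hp : ∀ i, 0 < p i) (hq : ∀ i, 0 < q i)
    (h1 : ∀ j, ∑ i, w j i * p i = q j * ∑ k, v j k * Real.exp (x k))
    (h2 : ∀ j, q j * ∑ i, w j i * (p i)⁻¹ = ∑ k, v j k * Real.exp (-x k))
    {K r : ℝ} (hK : √(∑ k, x k ^ 2) = K) (hr : r = K * Real.exp K) :
    √(∑ i, Real.log (p i) ^ 2) ≤ √(∑ i, Real.log (q i) ^ 2) + (r + r ^ 2) := by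
  set g := √(∑ i, Real.log (q i) ^ 2) with hg
  have g0 : 0 ≤ g := Real.sqrt_nonneg _
  have K0 : 0 ≤ K := hK ▸ Real.sqrt_nonneg _
  have r0 : 0 ≤ r := by rw [hr]; positivity
  have hxK : ∀ k, |x k| ≤ K := fun k => hK ▸ abs_le_sqrt_sum_sq x k
  have hK2 : ∑ k, x k ^ 2 = K ^ 2 := by
    rw [← hK, Real.sq_sqrt (Finset.sum_nonneg fun _ _ => sq_nonneg _)]
  have hr2 : ∑ k, (|x k| * Real.exp K) ^ 2 = r ^ 2 := by
    simp only [mul_pow, sq_abs, ← Finset.sum_mul, hK2, hr]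
  have hA : ∀ k, |Real.exp (x k) - 1| ≤ |x k| * Real.exp K := fun k =>
    (abs_exp_sub_one_le_mul_exp _).trans
      (mul_le_mul_of_nonneg_left (Real.exp_le_exp.2 (hxK k)) (abs_nonneg _))
  have hB : ∀ k, |Real.exp (-x k) - 1| ≤ |x k| * Real.exp K := fun k => by
    have := abs_exp_sub_one_le_mul_exp (-x k)
    rw [abs_neg] at this
    exact this.trans (mul_le_mul_of_nonneg_left (Real.exp_le_exp.2 (hxK k)) (abs_nonneg _))
  have hE1 : √(∑ k, (Real.exp (x k) - 1) ^ 2) ≤ r := by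
    rw [← Real.sqrt_sq r0, ← hr2]
    refine Real.sqrt_le_sqrt (Finset.sum_le_sum fun k _ => ?_)
    rw [← sq_abs]
    exact pow_le_pow_left₀ (abs_nonneg _) (hA k) 2
  have hE2 : ∑ k, (Real.exp (x k) + Real.exp (-x k) - 2) ≤ r ^ 2 := by
    rw [← hr2]
    refine Finset.sum_le_sum fun k _ => ?_
    have e : Real.exp (x k) + Real.exp (-x k) - 2
        = -((Real.exp (x k) - 1) * (Real.exp (-x k) - 1)) := by
      have : Real.exp (x k) * Real.exp (-x k) = 1 := by rw [← Real.exp_add]; simp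
      linear_combination this
    rw [e]
    refine (neg_le_abs _).trans ?_
    rw [abs_mul, sq]
    exact mul_le_mul (hA k) (hB k) (abs_nonneg _) (by positivity)
  -- averaging the pointwise estimate over `i` with the weights `w j i`
  have row : ∀ j, ∑ i, w j i * Real.log (p i) ^ 2 ≤ Real.log (q j) ^ 2
      + 2 * (Real.log (q j) * ∑ k, v j k * (Real.exp (x k) - 1))
      + (1 + 2 * g) * ∑ k, v j k * (Real.exp (x k) + Real.exp (-x k) - 2) := by
    intro j
    have hb : ∑ i, w j i * Real.log (p i) ^ 2 ≤ ∑ i, w j i * (Real.log (q j) ^ 2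
        + 2 * Real.log (q j) * (p i / q j - 1) + (1 + 2 * g) * (p i / q j + q j / p i - 2)) :=
      Finset.sum_le_sum fun i _ => mul_le_mul_of_nonneg_left
        (log_sq_le (hp i) (hq j) (abs_le_sqrt_sum_sq (fun i => Real.log (q i)) j)) (w0 j i)
    refine hb.trans (le_of_eq ?_)
    have s1 : ∑ i, w j i * (p i / q j) = ∑ k, v j k * Real.exp (x k) := by
      rw [← mul_right_inj' (hq j).ne', ← h1, Finset.mul_sum]
      refine Finset.sum_congr rfl fun i _ => ?_
      have := (hq j).ne'
      field_simp
    have s2 : ∑ i, w j i * (q j / p i) = ∑ k, v j k * Real.exp (-x k) := by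
      rw [← h2, Finset.mul_sum]
      exact Finset.sum_congr rfl fun i _ => by ring
    have lhs : ∑ i, w j i * (Real.log (q j) ^ 2
        + 2 * Real.log (q j) * (p i / q j - 1) + (1 + 2 * g) * (p i / q j + q j / p i - 2))
        = (Real.log (q j) ^ 2 - 2 * Real.log (q j) - 2 * (1 + 2 * g)) * ∑ i, w j i
          + (2 * Real.log (q j) + (1 + 2 * g)) * ∑ i, w j i * (p i / q j)
          + (1 + 2 * g) * ∑ i, w j i * (q j / p i) := by
      simp only [Finset.mul_sum, ← Finset.sum_add_distrib]
      exact Finset.sum_congr rfl fun i _ => by ring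
    have r1 : ∑ k, v j k * (Real.exp (x k) - 1) = ∑ k, v j k * Real.exp (x k) - 1 := by
      simp [mul_sub, Finset.sum_sub_distrib, vr]
    have r2 : ∑ k, v j k * (Real.exp (x k) + Real.exp (-x k) - 2)
        = ∑ k, v j k * Real.exp (x k) + ∑ k, v j k * Real.exp (-x k) - 2 := by
      simp [mul_sub, mul_add, Finset.sum_sub_distrib, Finset.sum_add_distrib, ← Finset.sum_mul, vr]
    rw [lhs, s1, s2, r1, r2, wr]
    ring
  have tot := Finset.sum_le_sum fun j (_ : j ∈ Finset.univ) => row j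
  rw [Finset.sum_add_distrib, Finset.sum_add_distrib, ← Finset.mul_sum, ← Finset.mul_sum] at tot
  rw [Finset.sum_comm] at tot
  simp only [← Finset.sum_mul, wc, one_mul] at tot
  have c2 : ∑ j, ∑ k, v j k * (Real.exp (x k) + Real.exp (-x k) - 2)
      = ∑ k, (Real.exp (x k) + Real.exp (-x k) - 2) := by
    rw [Finset.sum_comm]
    simp only [← Finset.sum_mul, vc, one_mul]
  rw [c2] at tot
  have cs := weighted_cauchy v0 vr vc (fun j => Real.log (q j)) (fun k => Real.exp (x k) - 1)
  have cs' := cs.trans (mul_le_mul_of_nonneg_left hE1 g0)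
  have hg2 : ∑ i, Real.log (q i) ^ 2 = g ^ 2 := by
    rw [hg, Real.sq_sqrt (Finset.sum_nonneg fun _ _ => sq_nonneg _)]
  rw [hg2] at tot
  refine Real.sqrt_le_iff.2 ⟨by positivity, ?_⟩
  have := mul_le_mul_of_nonneg_left hE2 (by linarith : 0 ≤ 1 + 2 * g)
  have : 0 ≤ r ^ 3 := by positivity
  nlinarith [sq_nonneg (r ^ 2)]

/-! ### Spectral calculus of Hermitian matrices -/

lemma spectral_form {m : ℕ} {A : Matrix (Fin m) (Fin m) ℂ} (hA : A.IsHermitian) :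
    A = (hA.eigenvectorUnitary : Matrix (Fin m) (Fin m) ℂ) *
      Matrix.diagonal (fun i => (hA.eigenvalues i : ℂ)) *
      (hA.eigenvectorUnitary : Matrix (Fin m) (Fin m) ℂ)ᴴ := by
  conv_lhs => rw [hA.spectral_theorem, Unitary.conjStarAlgAut_apply]
  rfl

lemma unitary_conjTranspose_mul {m : ℕ} (U : unitary (Matrix (Fin m) (Fin m) ℂ)) :
    (U : Matrix (Fin m) (Fin m) ℂ)ᴴ * (U : Matrix (Fin m) (Fin m) ℂ) = 1 :=
  Unitary.coe_star_mul_self U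

lemma unitary_mul_conjTranspose {m : ℕ} (U : unitary (Matrix (Fin m) (Fin m) ℂ)) :
    (U : Matrix (Fin m) (Fin m) ℂ) * (U : Matrix (Fin m) (Fin m) ℂ)ᴴ = 1 :=
  Unitary.coe_mul_star_self U

lemma matFun_eq {m : ℕ} (f : ℝ → ℝ) {A : Matrix (Fin m) (Fin m) ℂ} (hA : A.IsHermitian) :
    matFun f A = (hA.eigenvectorUnitary : Matrix (Fin m) (Fin m) ℂ) *
      Matrix.diagonal (fun i => (f (hA.eigenvalues i) : ℂ)) *
      (hA.eigenvectorUnitary : Matrix (Fin m) (Fin m) ℂ)ᴴ := by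
  rw [matFun, dif_pos hA]
  rfl

lemma conjTranspose_diagonal_ofReal {m : ℕ} (d : Fin m → ℝ) :
    (Matrix.diagonal fun i => (d i : ℂ))ᴴ = Matrix.diagonal fun i => (d i : ℂ) := by
  rw [diagonal_conjTranspose]
  congr 1
  ext i
  simp

lemma matFun_isHermitian {m : ℕ} (f : ℝ → ℝ) {A : Matrix (Fin m) (Fin m) ℂ}
    (hA : A.IsHermitian) : (matFun f A)ᴴ = matFun f A := by
  rw [matFun_eq f hA]
  simp only [conjTranspose_mul, conjTranspose_conjTranspose, conjTranspose_diagonal_ofReal,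
    Matrix.mul_assoc]

lemma matFun_mul_self {m : ℕ} (f : ℝ → ℝ) {A : Matrix (Fin m) (Fin m) ℂ}
    (hA : A.IsHermitian) : matFun f A * matFun f A =
      (hA.eigenvectorUnitary : Matrix (Fin m) (Fin m) ℂ) *
      Matrix.diagonal (fun i => ((f (hA.eigenvalues i) ^ 2 : ℝ) : ℂ)) *
      (hA.eigenvectorUnitary : Matrix (Fin m) (Fin m) ℂ)ᴴ := by
  rw [matFun_eq f hA]
  set U := (hA.eigenvectorUnitary : Matrix (Fin m) (Fin m) ℂ) with hU
  set D := Matrix.diagonal (fun i => (f (hA.eigenvalues i) : ℂ)) with hD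
  have h1 : Uᴴ * U = 1 := unitary_conjTranspose_mul _
  have h2 : D * D = Matrix.diagonal (fun i => ((f (hA.eigenvalues i) ^ 2 : ℝ) : ℂ)) := by
    rw [hD, diagonal_mul_diagonal]
    congr 1
    ext i
    push_cast
    ring
  rw [← h2]
  calc U * D * Uᴴ * (U * D * Uᴴ) = U * D * (Uᴴ * U) * D * Uᴴ := by simp only [Matrix.mul_assoc]
    _ = _ := by rw [h1]; simp only [Matrix.mul_assoc, Matrix.one_mul]

lemma fnorm_mlog {m : ℕ} {A : Matrix (Fin m) (Fin m) ℂ} (hA : A.IsHermitian) :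
    fnorm (mlog A) = √(∑ i, Real.log (hA.eigenvalues i) ^ 2) := by
  rw [fnorm, mlog, matFun_isHermitian _ hA, matFun_mul_self _ hA, trace_mul_comm,
    ← Matrix.mul_assoc, unitary_conjTranspose_mul, Matrix.one_mul, trace_diagonal,
    ← Complex.ofReal_sum, Complex.ofReal_re]

lemma msqrt_mul_self {m : ℕ} {A : Matrix (Fin m) (Fin m) ℂ} (hA : A.PosDef) :
    msqrt A * msqrt A = A := by
  rw [msqrt, matFun_mul_self _ hA.1]
  conv_rhs => rw [spectral_form hA.1]
  simp only [Real.sq_sqrt (hA.eigenvalues_pos _).le]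

lemma msqrt_isUnit {m : ℕ} {A : Matrix (Fin m) (Fin m) ℂ} (hA : A.PosDef) :
    IsUnit (msqrt A) := by
  have h : IsUnit (msqrt A * msqrt A) := by rw [msqrt_mul_self hA]; exact hA.isUnit
  rw [Matrix.isUnit_iff_isUnit_det, det_mul] at h
  rw [Matrix.isUnit_iff_isUnit_det]
  exact isUnit_of_mul_isUnit_left h

lemma posDef_congr {m : ℕ} {T : Matrix (Fin m) (Fin m) ℂ} (hT : IsUnit T)
    {B : Matrix (Fin m) (Fin m) ℂ} (hB : B.PosDef) : (T * B * Tᴴ).PosDef :=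
  hB.mul_mul_conjTranspose_same (Matrix.vecMul_injective_of_isUnit hT)

lemma posDef_diagonal_exp {m : ℕ} (x : Fin m → ℝ) :
    (Matrix.diagonal fun i => (Real.exp (x i) : ℂ)).PosDef :=
  Matrix.PosDef.diagonal fun i => by
    have := Real.exp_pos (x i)
    exact_mod_cast this

/-- Diagonal entries of `X diag(d) Xᴴ`. -/
lemma diag_entry {m : ℕ} (X : Matrix (Fin m) (Fin m) ℂ) (d : Fin m → ℝ) (j : Fin m) :
    (X * Matrix.diagonal (fun i => (d i : ℂ)) * Xᴴ) j j
      = ((∑ k, Complex.normSq (X j k) * d k : ℝ) : ℂ) := by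
  rw [Matrix.mul_apply]
  push_cast
  refine Finset.sum_congr rfl fun k _ => ?_
  rw [Matrix.mul_diagonal, conjTranspose_apply, ← Complex.mul_conj]
  simp only [Complex.star_def]
  ring

lemma row_sum {m : ℕ} {X : Matrix (Fin m) (Fin m) ℂ} (h : X * Xᴴ = 1) (j : Fin m) :
    ∑ k, Complex.normSq (X j k) = 1 := by
  have := diag_entry X (fun _ => 1) j
  simp only [Complex.ofReal_one, diagonal_one, h, one_apply_eq, mul_one] at this
  exact_mod_cast this.symm

lemma col_sum {m : ℕ} {X : Matrix (Fin m) (Fin m) ℂ} (h : X * Xᴴ = 1) (k : Fin m) :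
    ∑ j, Complex.normSq (X j k) = 1 := by
  have hstar : Xᴴ * Xᴴᴴ = 1 := by
    rw [conjTranspose_conjTranspose]
    exact mul_eq_one_comm.1 h
  simpa [conjTranspose_apply] using row_sum hstar k

/-! ### Simultaneous diagonalization -/

/-- The distance read off from any simultaneous diagonalization by congruence: the matrix
`A^{-1/2} B A^{-1/2}` is similar to `diag(exp x)`. -/
lemma rdist_eq {m : ℕ} {A B T : Matrix (Fin m) (Fin m) ℂ} (hA : A.PosDef)
    (hT : IsUnit T) (x : Fin m → ℝ) (hAT : A = T * Tᴴ)
    (hBT : B = T * Matrix.diagonal (fun i => (Real.exp (x i) : ℂ)) * Tᴴ) :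
    rdist A B = √(∑ i, x i ^ 2) := by
  set D := Matrix.diagonal (fun i => (Real.exp (x i) : ℂ)) with hD
  set S := msqrt A with hS
  have hSu : IsUnit S.det := (Matrix.isUnit_iff_isUnit_det _).1 (msqrt_isUnit hA)
  have hTu : IsUnit T.det := (Matrix.isUnit_iff_isUnit_det _).1 hT
  have hSH : Sᴴ = S := matFun_isHermitian _ hA.1
  have hSS : S * S = T * Tᴴ := by rw [← hAT]; exact msqrt_mul_self hA
  have hSi : IsUnit S⁻¹ := (Matrix.isUnit_nonsing_inv_iff).2 (msqrt_isUnit hA)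
  have hSiH : S⁻¹ᴴ = S⁻¹ := by rw [conjTranspose_nonsing_inv, hSH]
  have hP : (S⁻¹ * B * S⁻¹).PosDef := by
    have := posDef_congr hSi (hBT ▸ posDef_congr hT (posDef_diagonal_exp x) : B.PosDef)
    rwa [hSiH] at this
  obtain ⟨M, hM⟩ : IsUnit (S⁻¹ * T) := hSi.mul hT
  have hMi : (M⁻¹).val = T⁻¹ * S := by
    rw [Matrix.coe_units_inv, hM, Matrix.mul_inv_rev, Matrix.nonsing_inv_nonsing_inv _ hSu]
  have hTS : Tᴴ * S⁻¹ = T⁻¹ * S := by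
    calc Tᴴ * S⁻¹ = T⁻¹ * (T * Tᴴ) * S⁻¹ := by
          rw [← Matrix.mul_assoc, Matrix.nonsing_inv_mul _ hTu, Matrix.one_mul]
      _ = T⁻¹ * S * (S * S⁻¹) := by rw [← hSS]; simp only [Matrix.mul_assoc]
      _ = T⁻¹ * S := by rw [Matrix.mul_nonsing_inv _ hSu, Matrix.mul_one]
  have hconj : S⁻¹ * B * S⁻¹ = M.val * D * (M⁻¹).val := by
    rw [hMi, hM, hBT, ← hTS]
    simp only [Matrix.mul_assoc]
  have hch : (S⁻¹ * B * S⁻¹).charpoly.roots =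
      Multiset.map (fun i => (Real.exp (x i) : ℂ)) Finset.univ.val := by
    rw [hconj, Matrix.coe_units_inv, Matrix.charpoly_units_conj, hD, charpoly_diagonal, Polynomial.roots_prod]
    · simp
    · simp [Finset.prod_ne_zero_iff, Polynomial.X_sub_C_ne_zero]
  rw [hP.1.roots_charpoly_eq_eigenvalues] at hch
  have hsum := congrArg (fun s => (Multiset.map (fun z : ℂ => Real.log z.re ^ 2) s).sum) hch
  simp only [Multiset.map_map, Function.comp_def, Complex.ofReal_re, Real.log_exp,
    Complex.coe_algebraMap] at hsum
  rw [rdist, fnorm_mlog hP.1]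
  congr 1

/-- Two positive definite matrices are simultaneously diagonalized by one congruence. -/
lemma exists_simultaneous {m : ℕ} {A B : Matrix (Fin m) (Fin m) ℂ} (hA : A.PosDef)
    (hB : B.PosDef) : ∃ (T : Matrix (Fin m) (Fin m) ℂ) (x : Fin m → ℝ), IsUnit T ∧
      A = T * Tᴴ ∧ B = T * Matrix.diagonal (fun i => (Real.exp (x i) : ℂ)) * Tᴴ := by
  set S := msqrt A with hS
  have hSu : IsUnit S.det := (Matrix.isUnit_iff_isUnit_det _).1 (msqrt_isUnit hA)
  have hSH : Sᴴ = S := matFun_isHermitian _ hA.1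
  have hSS : S * S = A := msqrt_mul_self hA
  have hSi : IsUnit S⁻¹ := (Matrix.isUnit_nonsing_inv_iff).2 (msqrt_isUnit hA)
  have hSiH : S⁻¹ᴴ = S⁻¹ := by rw [conjTranspose_nonsing_inv, hSH]
  have hP : (S⁻¹ * B * S⁻¹).PosDef := by
    have := posDef_congr hSi hB
    rwa [hSiH] at this
  have hspec := spectral_form hP.1
  set V := (hP.1.eigenvectorUnitary : Matrix (Fin m) (Fin m) ℂ) with hV
  have hVV : V * Vᴴ = 1 := unitary_mul_conjTranspose _
  refine ⟨S * V, fun i => Real.log (hP.1.eigenvalues i), ?_, ?_, ?_⟩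
  · exact (msqrt_isUnit hA).mul (IsUnit.of_mul_eq_one _ hVV)
  · rw [conjTranspose_mul, hSH, ← hSS]
    calc S * S = S * (V * Vᴴ) * S := by rw [hVV, Matrix.mul_one]
      _ = _ := by simp only [Matrix.mul_assoc]
  · simp only [Real.exp_log (hP.eigenvalues_pos _)]
    rw [conjTranspose_mul, hSH]
    calc B = S * (S⁻¹ * B * S⁻¹) * S := by
          rw [Matrix.mul_assoc, Matrix.nonsing_inv_mul_cancel_right _ _ hSu,
            Matrix.mul_nonsing_inv_cancel_left _ _ hSu]
      _ = S * (V * Matrix.diagonal (fun i => (hP.1.eigenvalues i : ℂ)) * Vᴴ) * S :=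
          congrArg (fun N => S * N * S) hspec
      _ = _ := by simp only [Matrix.mul_assoc]

lemma diagonal_exp_mul {m : ℕ} (x y : Fin m → ℝ) :
    Matrix.diagonal (fun i => (Real.exp (x i) : ℂ)) * Matrix.diagonal (fun i => (Real.exp (y i) : ℂ))
      = Matrix.diagonal (fun i => (Real.exp (x i + y i) : ℂ)) := by
  rw [diagonal_mul_diagonal]
  congr 1
  ext i
  rw [Real.exp_add]
  push_cast
  rfl

/-! ### Growth of the norm of the logarithm along geodesics -/

/-- The local estimate: replacing `Q = T Tᴴ` by `P = T diag(exp x) Tᴴ` increases `‖log ·‖₂` by at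
most `r + r ^ 2`, where `r` equals the Euclidean norm `K` of `x` to first order. -/
lemma matrix_step {m : ℕ} {T : Matrix (Fin m) (Fin m) ℂ} (hT : IsUnit T) (x : Fin m → ℝ)
    {K r : ℝ} (hK : √(∑ k, x k ^ 2) = K) (hr : r = K * Real.exp K) :
    fnorm (mlog (T * Matrix.diagonal (fun i => (Real.exp (x i) : ℂ)) * Tᴴ))
      ≤ fnorm (mlog (T * Tᴴ)) + (r + r ^ 2) := by
  have hQ : (T * Tᴴ).PosDef := by simpa using posDef_congr hT Matrix.PosDef.one
  have hP := posDef_congr hT (posDef_diagonal_exp x)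
  rw [fnorm_mlog hQ.1, fnorm_mlog hP.1]
  have hQs := spectral_form hQ.1
  have hPs := spectral_form hP.1
  have hUU := unitary_mul_conjTranspose hP.1.eigenvectorUnitary
  have hVV := unitary_mul_conjTranspose hQ.1.eigenvectorUnitary
  have hq := hQ.eigenvalues_pos
  have hp := hP.eigenvalues_pos
  generalize (hP.1.eigenvectorUnitary : Matrix (Fin m) (Fin m) ℂ) = U at *
  generalize (hQ.1.eigenvectorUnitary : Matrix (Fin m) (Fin m) ℂ) = V at *
  generalize hP.1.eigenvalues = p at *
  generalize hQ.1.eigenvalues = q at *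
  have hUU' : Uᴴ * U = 1 := mul_eq_one_comm.1 hUU
  have hVV' : Vᴴ * V = 1 := mul_eq_one_comm.1 hVV
  have hTu : IsUnit T.det := (Matrix.isUnit_iff_isUnit_det _).1 hT
  set E := Matrix.diagonal (fun i => (Real.exp (x i) : ℂ)) with hE
  set F := Matrix.diagonal (fun i => (Real.exp (-x i) : ℂ)) with hF
  set d := Matrix.diagonal (fun i => (√(q i) : ℂ)) with hd
  set c := Matrix.diagonal (fun i => ((√(q i))⁻¹ : ℂ)) with hc
  have hsq : ∀ i, (√(q i) : ℂ) ≠ 0 := fun i => by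
    exact_mod_cast (Real.sqrt_pos.2 (hq i)).ne'
  have hcd : c * d = 1 := by
    rw [hc, hd, diagonal_mul_diagonal, ← diagonal_one]
    congr 1; ext i; exact inv_mul_cancel₀ (hsq i)
  have hdc : d * c = 1 := mul_eq_one_comm.1 hcd
  have hdd : Matrix.diagonal (fun i => (q i : ℂ)) = d * d := by
    rw [hd, diagonal_mul_diagonal]
    congr 1; ext i
    rw [← Complex.ofReal_mul, Real.mul_self_sqrt (hq i).le]
  have hdH : dᴴ = d := conjTranspose_diagonal_ofReal _
  have hcH : cᴴ = c := by
    simp [hc]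
  have hEF : E * F = 1 := by
    rw [hE, hF, diagonal_exp_mul]; simp
  set X := Vᴴ * U with hX
  -- `Z` is unitary because `T Tᴴ = Q = V d d Vᴴ`
  set Z := c * Vᴴ * T with hZ
  have hXX : X * Xᴴ = 1 := by
    rw [hX, conjTranspose_mul, conjTranspose_conjTranspose]
    calc Vᴴ * U * (Uᴴ * V) = Vᴴ * (U * Uᴴ) * V := by simp only [Matrix.mul_assoc]
      _ = 1 := by rw [hUU, Matrix.mul_one, hVV']
  have hZZ : Z * Zᴴ = 1 := by
    rw [hZ, conjTranspose_mul, conjTranspose_mul, conjTranspose_conjTranspose, hcH]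
    calc c * Vᴴ * T * (Tᴴ * (V * c)) = c * Vᴴ * (T * Tᴴ) * V * c := by
          simp only [Matrix.mul_assoc]
      _ = c * (Vᴴ * V) * d * d * (Vᴴ * V) * c := by
          rw [hQs, hdd]; simp only [Matrix.mul_assoc]
      _ = (c * d) * (d * c) := by rw [hVV']; simp only [Matrix.mul_assoc, Matrix.mul_one]
      _ = 1 := by rw [hcd, hdc, Matrix.mul_one]
  have hZZ' : Zᴴ * Z = 1 := mul_eq_one_comm.1 hZZ
  have hXX' : Xᴴ * X = 1 := mul_eq_one_comm.1 hXX
  have hdZ : d * Z = Vᴴ * T := by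
    rw [hZ, Matrix.mul_assoc, ← Matrix.mul_assoc, hdc, Matrix.one_mul]
  have hZd : Zᴴ * d = Tᴴ * V := by
    have := congrArg conjTranspose hdZ
    simpa only [conjTranspose_mul, conjTranspose_conjTranspose, hdH] using this
  -- the compression of `P` to the eigenbasis of `Q`, computed in two ways
  have key : X * Matrix.diagonal (fun i => (p i : ℂ)) * Xᴴ = d * (Z * E * Zᴴ) * d := by
    calc X * Matrix.diagonal (fun i => (p i : ℂ)) * Xᴴ
        = Vᴴ * (U * Matrix.diagonal (fun i => (p i : ℂ)) * Uᴴ) * V := by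
          rw [hX, conjTranspose_mul, conjTranspose_conjTranspose]; simp only [Matrix.mul_assoc]
      _ = (Vᴴ * T) * E * (Tᴴ * V) := by rw [← hPs]; simp only [Matrix.mul_assoc]
      _ = _ := by rw [← hdZ, ← hZd]; simp only [Matrix.mul_assoc]
  have hpp : Matrix.diagonal (fun i => (p i : ℂ)) * Matrix.diagonal (fun i => (((p i)⁻¹ : ℝ) : ℂ))
      = 1 := by
    rw [diagonal_mul_diagonal, ← diagonal_one]
    congr 1; ext i
    rw [← Complex.ofReal_mul, mul_inv_cancel₀ (hp i).ne', Complex.ofReal_one]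
  have keyinv : d * (X * Matrix.diagonal (fun i => (((p i)⁻¹ : ℝ) : ℂ)) * Xᴴ) * d = Z * F * Zᴴ := by
    -- `X diag(p⁻¹) Xᴴ` and `c Z F Zᴴ c` are inverse to the same matrix, by `key`
    have i1 : (X * Matrix.diagonal (fun i => (p i : ℂ)) * Xᴴ) *
        (X * Matrix.diagonal (fun i => (((p i)⁻¹ : ℝ) : ℂ)) * Xᴴ) = 1 := by
      calc _ = X * Matrix.diagonal (fun i => (p i : ℂ)) * (Xᴴ * X) *
            Matrix.diagonal (fun i => (((p i)⁻¹ : ℝ) : ℂ)) * Xᴴ := by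
            simp only [Matrix.mul_assoc]
        _ = X * (Matrix.diagonal (fun i => (p i : ℂ)) *
            Matrix.diagonal (fun i => (((p i)⁻¹ : ℝ) : ℂ))) * Xᴴ := by
            rw [hXX', Matrix.mul_one]; simp only [Matrix.mul_assoc]
        _ = 1 := by rw [hpp, Matrix.mul_one, hXX]
    have i2 : (c * (Z * F * Zᴴ) * c) * (d * (Z * E * Zᴴ) * d) = 1 := by
      have hFE : F * E = 1 := mul_eq_one_comm.1 hEF
      calc _ = c * Z * F * Zᴴ * (c * d) * Z * E * Zᴴ * d := by simp only [Matrix.mul_assoc]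
        _ = c * Z * F * (Zᴴ * Z) * E * Zᴴ * d := by
            rw [hcd, Matrix.mul_one]; simp only [Matrix.mul_assoc]
        _ = c * Z * (F * E) * Zᴴ * d := by
            rw [hZZ', Matrix.mul_one]; simp only [Matrix.mul_assoc]
        _ = c * (Z * Zᴴ) * d := by rw [hFE, Matrix.mul_one]; simp only [Matrix.mul_assoc]
        _ = 1 := by rw [hZZ, Matrix.mul_one, hcd]
    rw [key] at i1
    have heq := left_inv_eq_right_inv i2 i1
    rw [← heq]
    calc _ = (d * c) * (Z * F * Zᴴ) * (c * d) := by simp only [Matrix.mul_assoc]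
      _ = _ := by rw [hcd, hdc, Matrix.one_mul, Matrix.mul_one]
  have hdiag : ∀ (N : Matrix (Fin m) (Fin m) ℂ) (j : Fin m),
      (d * N * d) j j = (q j : ℂ) * N j j := by
    intro N j
    rw [hd, Matrix.mul_diagonal, Matrix.diagonal_mul]
    have : (√(q j) : ℂ) * (√(q j) : ℂ) = (q j : ℂ) := by
      rw [← Complex.ofReal_mul, Real.mul_self_sqrt (hq j).le]
    linear_combination N j j * this
  refine scalar_step (w := fun j i => Complex.normSq (X j i))
    (v := fun j k => Complex.normSq (Z j k)) (fun _ _ => Complex.normSq_nonneg _)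
    (row_sum hXX) (col_sum hXX) (fun _ _ => Complex.normSq_nonneg _) (row_sum hZZ) (col_sum hZZ)
    hp hq ?_ ?_ hK hr
  · intro j
    have := congrFun (congrFun key j) j
    rw [hdiag, diag_entry, diag_entry] at this
    exact_mod_cast this
  · intro j
    have := congrFun (congrFun keyinv j) j
    rw [hdiag, diag_entry, diag_entry] at this
    exact_mod_cast this

/-- The local estimate summed along the geodesic `t ↦ T diag(exp (t x)) Tᴴ`, cut into `n + 1` equal
pieces with `n → ∞`; the quadratic errors disappear in the limit. -/
lemma matrix_long_step {m : ℕ} {T : Matrix (Fin m) (Fin m) ℂ} (hT : IsUnit T) (x : Fin m → ℝ) :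
    fnorm (mlog (T * Matrix.diagonal (fun i => (Real.exp (x i) : ℂ)) * Tᴴ))
      ≤ fnorm (mlog (T * Tᴴ)) + √(∑ k, x k ^ 2) := by
  set K := √(∑ k, x k ^ 2) with hK
  have hn : ∀ n : ℕ, fnorm (mlog (T * Matrix.diagonal (fun i => (Real.exp (x i) : ℂ)) * Tᴴ))
      ≤ fnorm (mlog (T * Tᴴ)) + (K * Real.exp (K / (n + 1 : ℝ))
        + (K * Real.exp (K / (n + 1 : ℝ))) ^ 2 * (1 / ((n : ℝ) + 1))) := by
    intro n
    have hn0 : (0 : ℝ) < n + 1 := by positivity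
    set h : ℝ := K / (n + 1) with hh
    set r := h * Real.exp h with hr
    have hstep : √(∑ k, (x k / (n + 1)) ^ 2) = h := by
      simp only [div_pow, ← Finset.sum_div]
      rw [Real.sqrt_div (Finset.sum_nonneg fun _ _ => sq_nonneg _), Real.sqrt_sq hn0.le]
    have ind : ∀ k : ℕ, fnorm (mlog (T * Matrix.diagonal
        (fun i => (Real.exp (k * (x i / (n + 1))) : ℂ)) * Tᴴ))
        ≤ fnorm (mlog (T * Tᴴ)) + k * (r + r ^ 2) := by
      intro k
      induction k with
      | zero => simp
      | succ k ih =>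
        -- the base point `T diag(exp (k x / (n + 1))) Tᴴ` equals `Y Yᴴ`
        set Y := T * Matrix.diagonal (fun i => (Real.exp (k * (x i / (n + 1)) / 2) : ℂ)) with hY
        have hYu : IsUnit Y := hT.mul (posDef_diagonal_exp fun i => k * (x i / (n + 1)) / 2).isUnit
        have hYH : Yᴴ = Matrix.diagonal (fun i => (Real.exp (k * (x i / (n + 1)) / 2) : ℂ)) * Tᴴ := by
          rw [hY, conjTranspose_mul, conjTranspose_diagonal_ofReal]
        have e1 : Y * Yᴴ = T * Matrix.diagonal
            (fun i => (Real.exp (k * (x i / (n + 1))) : ℂ)) * Tᴴ := by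
          rw [hYH, hY, Matrix.mul_assoc, ← Matrix.mul_assoc _ _ Tᴴ, diagonal_exp_mul,
            ← Matrix.mul_assoc]
          simp only [add_halves]
        have e2 : Y * Matrix.diagonal (fun i => (Real.exp (x i / (n + 1)) : ℂ)) * Yᴴ
            = T * Matrix.diagonal
            (fun i => (Real.exp ((k + 1 : ℕ) * (x i / (n + 1))) : ℂ)) * Tᴴ := by
          rw [hYH, hY, Matrix.mul_assoc T, diagonal_exp_mul, Matrix.mul_assoc,
            ← Matrix.mul_assoc _ _ Tᴴ, diagonal_exp_mul, ← Matrix.mul_assoc]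
          congr 4
          ext i
          congr 2
          push_cast
          ring
        have := matrix_step hYu (fun i => x i / (n + 1)) hstep hr
        rw [e1, e2] at this
        refine this.trans ((add_le_add_left ih _).trans (le_of_eq ?_))
        push_cast
        ring
    have := ind (n + 1)
    have hx : ∀ i, ((n + 1 : ℕ) : ℝ) * (x i / (n + 1)) = x i := fun i => by
      push_cast; field_simp
    simp only [hx] at this
    refine this.trans (le_of_eq ?_)
    rw [hr, hh]
    push_cast
    field_simp
  have hlim1 : Filter.Tendsto (fun n : ℕ => K * Real.exp (K / (n + 1 : ℝ))) Filter.atTop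
      (nhds K) := by
    have h1 : Filter.Tendsto (fun n : ℕ => K * (1 / ((n : ℝ) + 1))) Filter.atTop (nhds (K * 0)) :=
      tendsto_one_div_add_atTop_nhds_zero_nat.const_mul K
    rw [mul_zero] at h1
    have h2 := ((Real.continuous_exp.tendsto 0).comp h1).const_mul K
    rw [Real.exp_zero, mul_one] at h2
    refine h2.congr fun n => ?_
    simp [div_eq_mul_inv]
  have hlim := ((hlim1.add ((hlim1.pow 2).mul
    (tendsto_one_div_add_atTop_nhds_zero_nat (𝕜 := ℝ)))).const_add (fnorm (mlog (T * Tᴴ))))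
  rw [mul_zero, add_zero] at hlim
  exact ge_of_tendsto' hlim hn

/-- `δ(A,B) = ‖log(A^{-1/2} B A^{-1/2})‖₂` is a metric on the positive definite matrices. -/
theorem rdist_is_metric {m : ℕ} :
    (∀ A B : Matrix (Fin m) (Fin m) ℂ, A.PosDef → B.PosDef → 0 ≤ rdist A B) ∧
    (∀ A B : Matrix (Fin m) (Fin m) ℂ, A.PosDef → B.PosDef → (rdist A B = 0 ↔ A = B)) ∧
    (∀ A B : Matrix (Fin m) (Fin m) ℂ, A.PosDef → B.PosDef → rdist A B = rdist B A) ∧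
    (∀ A B C : Matrix (Fin m) (Fin m) ℂ, A.PosDef → B.PosDef → C.PosDef →
      rdist A C ≤ rdist A B + rdist B C) := by
  refine ⟨fun A B _ _ => Real.sqrt_nonneg _, ?_, ?_, ?_⟩
  · intro A B hA hB
    constructor
    · intro h
      obtain ⟨T, x, hT, hAT, hBT⟩ := exists_simultaneous hA hB
      rw [rdist_eq hA hT x hAT hBT,
        Real.sqrt_eq_zero (Finset.sum_nonneg fun _ _ => sq_nonneg _),
        Finset.sum_eq_zero_iff_of_nonneg fun _ _ => sq_nonneg _] at h
      have hx : ∀ i, x i = 0 := fun i => by simpa using h i (Finset.mem_univ i)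
      rw [hAT, hBT]
      simp [hx]
    · rintro rfl
      obtain ⟨T, -, hT, hAT, -⟩ := exists_simultaneous hA hA
      rw [rdist_eq hA hT 0 hAT (by simpa using hAT)]
      simp
  · intro A B hA hB
    obtain ⟨T, x, hT, hAT, hBT⟩ := exists_simultaneous hA hB
    rw [rdist_eq hA hT x hAT hBT]
    -- `Y = T diag(e^{x/2})` diagonalizes the pair `(B, A)`, with exponents `-x`
    set Y := T * Matrix.diagonal (fun i => (Real.exp (x i / 2) : ℂ)) with hY
    have hYu : IsUnit Y := hT.mul (posDef_diagonal_exp fun i => x i / 2).isUnit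
    have hYH : Yᴴ = Matrix.diagonal (fun i => (Real.exp (x i / 2) : ℂ)) * Tᴴ := by
      rw [hY, conjTranspose_mul, conjTranspose_diagonal_ofReal]
    have e1 : B = Y * Yᴴ := by
      rw [hBT, hYH, hY, Matrix.mul_assoc T _ (_ * Tᴴ), ← Matrix.mul_assoc _ _ Tᴴ,
        diagonal_exp_mul, ← Matrix.mul_assoc]
      simp only [add_halves]
    have e2 : A = Y * Matrix.diagonal (fun i => (Real.exp (-x i) : ℂ)) * Yᴴ := by
      rw [hYH, hY, Matrix.mul_assoc T, diagonal_exp_mul, Matrix.mul_assoc,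
        ← Matrix.mul_assoc _ _ Tᴴ, diagonal_exp_mul, hAT]
      have : ∀ i, x i / 2 + -x i + x i / 2 = 0 := fun i => by ring
      simp [this]
    rw [rdist_eq hB hYu (fun i => -x i) e1 e2]
    simp
  · intro A B C hA hB hC
    obtain ⟨T, x, hT, hBT, hCT⟩ := exists_simultaneous hB hC
    rw [rdist_eq hB hT x hBT hCT]
    have hSi : IsUnit (msqrt A)⁻¹ := (Matrix.isUnit_nonsing_inv_iff).2 (msqrt_isUnit hA)
    have hSiH : (msqrt A)⁻¹ᴴ = (msqrt A)⁻¹ := by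
      rw [conjTranspose_nonsing_inv, msqrt, matFun_isHermitian _ hA.1]
    -- congruence by `A^{-1/2}` moves `A` to `1`, so that `rdist A ·` becomes `‖log ·‖₂`
    have := matrix_long_step (hSi.mul hT) x
    rw [conjTranspose_mul, hSiH] at this
    rw [rdist, rdist, hBT, hCT]
    simpa only [Matrix.mul_assoc] using this
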